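/- Let (L, I) be an integral system on a set X, let (f_n) be a sequence in L¹ increasing pointwise to a function f : X → (−∞,∞], and assume lim_n I¹(f_n) < ∞. Then the set {x ∈ X : f(x) = ∞} is null, the real-valued function equal to f on {f < ∞} and to 0 on {f = ∞} belongs to L¹, and its integral I¹ equals lim_n I¹(f_n). -/

import Mathlib

open Filter Topology

/-- An integral system on a set `X`: a linear lattice `L` of real-valued functions on `X`
(a vector subspace of `ℝ^X` closed under pointwise max and min) together with a
preintegral `I` on it (a positive linear functional that is continuous in the sense that
`I fₙ → 0` whenever `fₙ ∈ L` are nonnegative and decrease pointwise to `0`). -/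
structure IntegralSystem (X : Type*) where
  L : Set (X → ℝ)
  I : (X → ℝ) → ℝ
  zero_mem : (0 : X → ℝ) ∈ L
  add_mem : ∀ ⦃f g : X → ℝ⦄, f ∈ L → g ∈ L → f + g ∈ L
  smul_mem : ∀ (c : ℝ) ⦃f : X → ℝ⦄, f ∈ L → c • f ∈ L
  sup_mem : ∀ ⦃f g : X → ℝ⦄, f ∈ L → g ∈ L → f ⊔ g ∈ L
  inf_mem : ∀ ⦃f g : X → ℝ⦄, f ∈ L → g ∈ L → f ⊓ g ∈ L
  I_add : ∀ ⦃f g : X → ℝ⦄, f ∈ L → g ∈ L → I (f + g) = I f + I g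
  I_smul : ∀ (c : ℝ) ⦃f : X → ℝ⦄, f ∈ L → I (c • f) = c * I f
  I_pos : ∀ ⦃f : X → ℝ⦄, f ∈ L → (∀ x, 0 ≤ f x) → 0 ≤ I f
  I_cont : ∀ f : ℕ → X → ℝ, (∀ n, f n ∈ L) → (∀ n x, 0 ≤ f n x) →
    (∀ n x, f (n + 1) x ≤ f n x) →
    (∀ x, Tendsto (fun n => f n x) atTop (𝓝 0)) →
    Tendsto (fun n => I (f n)) atTop (𝓝 0)

variable {X : Type*}

/-- `f : X → (−∞,∞]` belongs to `L_↑` iff some sequence in `L` increases pointwise to `f`. -/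
def MemLup (S : IntegralSystem X) (f : X → EReal) : Prop :=
  ∃ g : ℕ → X → ℝ, (∀ n, g n ∈ S.L) ∧ (∀ n x, g n x ≤ g (n + 1) x) ∧
    ∀ x, Tendsto (fun n => ((g n x : EReal))) atTop (𝓝 (f x))

/-- For `f ∈ L_↑`, `I_↑ f = lim I (g n)` for any sequence `(g n)` in `L` increasing
pointwise to `f`; the value does not depend on the chosen sequence, so we may define it as
the supremum of all such limits. -/
noncomputable def Iup (S : IntegralSystem X) (f : X → EReal) : EReal :=
  sSup { c : EReal | ∃ g : ℕ → X → ℝ, (∀ n, g n ∈ S.L) ∧ (∀ n x, g n x ≤ g (n + 1) x) ∧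
    (∀ x, Tendsto (fun n => ((g n x : EReal))) atTop (𝓝 (f x))) ∧
    Tendsto (fun n => ((S.I (g n) : EReal))) atTop (𝓝 c) }

/-- `L_↓ = −L_↑`. -/
def MemLdown (S : IntegralSystem X) (f : X → EReal) : Prop :=
  MemLup S (fun x => -(f x))

/-- `I_↓ f = −I_↑(−f)`. -/
noncomputable def Idown (S : IntegralSystem X) (f : X → EReal) : EReal :=
  -(Iup S (fun x => -(f x)))

/-- The upper integral `Ī f = inf { I_↑ g : g ∈ L_↑, f ≤ g }` (with `inf ∅ = ∞`). -/
noncomputable def upperInt (S : IntegralSystem X) (f : X → EReal) : EReal :=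
  sInf (Iup S '' { g | MemLup S g ∧ ∀ x, f x ≤ g x })

/-- The lower integral `I̲ f = sup { I_↓ g : g ∈ L_↓, g ≤ f }` (with `sup ∅ = −∞`). -/
noncomputable def lowerInt (S : IntegralSystem X) (f : X → EReal) : EReal :=
  sSup (Idown S '' { g | MemLdown S g ∧ ∀ x, g x ≤ f x })

/-- `f : X → ℝ` is `I`-integrable iff its lower and upper integrals coincide and are finite. -/
def Integrable1 (S : IntegralSystem X) (f : X → ℝ) : Prop :=
  ∃ c : ℝ, lowerInt S (fun x => ((f x : EReal))) = (c : EReal) ∧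
    upperInt S (fun x => ((f x : EReal))) = (c : EReal)

/-- The Daniell extension `I¹` of `I`: the common value of the lower and upper integrals of
an integrable function. -/
noncomputable def Int1 (S : IntegralSystem X) (f : X → ℝ) : ℝ :=
  (upperInt S (fun x => ((f x : EReal)))).toReal

/-!
The upper integral itself commutes with increasing limits `fₙ ↑ F`, whether or not the `fₙ` are
integrable, as soon as `Ī f₀ ≠ -∞`. Indeed, let `G ≥ fₙ` in `L_↑` satisfy `I_↑ G < Ī fₙ + ε`, and
let `H ≥ fₙ₊₁` be optimal up to a small enough error. Since `G ⊓ H ≥ fₙ`, modularity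
`I_↑ (G ⊔ H) + I_↑ (G ⊓ H) = I_↑ G + I_↑ H` gives `I_↑ (G ⊔ H) < Ī fₙ₊₁ + ε`: near-optimal majorants
can be chosen increasing with the same `ε` at every stage, and their supremum is a majorant of `F`.

Hence `Ī F = lim I¹ fₙ < ∞`. If `G ≥ F` has finite `I_↑ G` and `gₙ ↑ G` with `gₙ ∈ L`, then the
indicator of `{G = ∞}` is at most `G - gₙ`, whose integral tends to `0`, so `{F = ∞}` is null.
Neither the upper nor the lower integral sees the values on a null set, so the lower integral of
the finite part of `F` is at least every `I¹ fₙ`, while its upper integral is at most `Ī F`.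
-/

namespace IntegralSystem

variable {S : IntegralSystem X}

section Lattice

variable {f g : X → ℝ}

theorem neg_mem (hf : f ∈ S.L) : -f ∈ S.L := by
  simpa only [neg_one_smul] using S.smul_mem (-1) hf

theorem I_neg (hf : f ∈ S.L) : S.I (-f) = -S.I f := by
  simpa only [neg_one_smul, neg_one_mul] using S.I_smul (-1) hf

theorem sub_mem (hf : f ∈ S.L) (hg : g ∈ S.L) : f - g ∈ S.L := by
  simpa only [sub_eq_add_neg] using S.add_mem hf (neg_mem hg)

theorem I_sub (hf : f ∈ S.L) (hg : g ∈ S.L) : S.I (f - g) = S.I f - S.I g := by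
  rw [sub_eq_add_neg, S.I_add hf (neg_mem hg), I_neg hg, sub_eq_add_neg]

variable (S) in
theorem I_zero : S.I 0 = 0 := by
  simpa only [zero_smul, zero_mul] using S.I_smul 0 S.zero_mem

theorem I_mono (hf : f ∈ S.L) (hg : g ∈ S.L) (hfg : f ≤ g) : S.I f ≤ S.I g := by
  rw [← sub_nonneg, ← I_sub hg hf]
  exact S.I_pos (sub_mem hg hf) fun x => sub_nonneg.2 (hfg x)

theorem I_sup_add_I_inf (hf : f ∈ S.L) (hg : g ∈ S.L) :
    S.I (f ⊔ g) + S.I (f ⊓ g) = S.I f + S.I g := by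
  rw [← S.I_add (S.sup_mem hf hg) (S.inf_mem hf hg), ← S.I_add hf hg, add_comm, inf_add_sup]

theorem partialSups_mem {u : ℕ → X → ℝ} (hu : ∀ n, u n ∈ S.L) (n : ℕ) :
    partialSups u n ∈ S.L := by
  induction n with
  | zero => simpa only [partialSups_zero] using hu 0
  | succ n ih => simpa only [partialSups_add_one] using S.sup_mem ih (hu (n + 1))

theorem tendsto_I_of_monotone {u : ℕ → X → ℝ} (hu : ∀ n, u n ∈ S.L) (hmono : Monotone u)
    (hf : f ∈ S.L) (hlim : ∀ x, Tendsto (fun n => u n x) atTop (𝓝 (f x))) :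
    Tendsto (fun n => S.I (u n)) atTop (𝓝 (S.I f)) := by
  have hle (n x) : u n x ≤ f x := Monotone.ge_of_tendsto (fun _ _ h => hmono h x) (hlim x) n
  have hzero : Tendsto (fun n => S.I (f - u n)) atTop (𝓝 0) :=
    S.I_cont _ (fun n => sub_mem hf (hu n)) (fun n x => sub_nonneg.2 (hle n x))
      (fun n x => sub_le_sub_left (hmono n.le_succ x) (f x))
      (fun x => by simpa only [Pi.sub_apply, sub_self] using (hlim x).const_sub (f x))
  simpa only [I_sub hf (hu _), sub_sub_cancel, sub_zero] using hzero.const_sub (S.I f)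

end Lattice

/-- The sequence `g` in `L` increases pointwise to `G`; such a `g` witnesses `G ∈ L_↑`. -/
structure IncreasesTo (S : IntegralSystem X) (g : ℕ → X → ℝ) (G : X → EReal) : Prop where
  mem (n : ℕ) : g n ∈ S.L
  mono : Monotone g
  tendsto (x : X) : Tendsto (fun n => (g n x : EReal)) atTop (𝓝 (G x))

section IncreasesTo

variable {g h : ℕ → X → ℝ} {G H : X → EReal}

theorem memLup_iff : MemLup S G ↔ ∃ g, S.IncreasesTo g G :=
  ⟨fun ⟨g, hmem, hmono, hlim⟩ => ⟨g, hmem, monotone_nat_of_le_succ hmono, hlim⟩,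
    fun ⟨g, hg⟩ => ⟨g, hg.mem, fun n x => hg.mono n.le_succ x, hg.tendsto⟩⟩

namespace IncreasesTo

theorem const {k : X → ℝ} (hk : k ∈ S.L) :
    S.IncreasesTo (fun _ => k) (fun x => (k x : EReal)) :=
  ⟨fun _ => hk, monotone_const, fun _ => tendsto_const_nhds⟩

theorem isLUB (hg : S.IncreasesTo g G) (x : X) :
    IsLUB (Set.range fun n => (g n x : EReal)) (G x) :=
  isLUB_of_tendsto_atTop (fun _ _ h => EReal.coe_le_coe (hg.mono h x)) (hg.tendsto x)

theorem coe_le (hg : S.IncreasesTo g G) (n : ℕ) (x : X) : (g n x : EReal) ≤ G x :=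
  (hg.isLUB x).1 ⟨n, rfl⟩

theorem ne_bot (hg : S.IncreasesTo g G) (x : X) : G x ≠ ⊥ :=
  ((EReal.bot_lt_coe _).trans_le (hg.coe_le 0 x)).ne'

theorem add (hg : S.IncreasesTo g G) (hh : S.IncreasesTo h H) :
    S.IncreasesTo (fun n => g n + h n) (G + H) where
  mem n := S.add_mem (hg.mem n) (hh.mem n)
  mono := hg.mono.add hh.mono
  tendsto x := (EReal.continuousAt_add (.inr (hh.ne_bot x)) (.inl (hg.ne_bot x))).tendsto.comp
    ((hg.tendsto x).prodMk_nhds (hh.tendsto x))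

theorem sup (hg : S.IncreasesTo g G) (hh : S.IncreasesTo h H) :
    S.IncreasesTo (fun n => g n ⊔ h n) (G ⊔ H) where
  mem n := S.sup_mem (hg.mem n) (hh.mem n)
  mono := hg.mono.sup hh.mono
  tendsto x := by
    simpa only [Pi.sup_apply, EReal.coe_strictMono.monotone.map_sup] using
      (hg.tendsto x).sup_nhds (hh.tendsto x)

theorem inf (hg : S.IncreasesTo g G) (hh : S.IncreasesTo h H) :
    S.IncreasesTo (fun n => g n ⊓ h n) (G ⊓ H) where
  mem n := S.inf_mem (hg.mem n) (hh.mem n)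
  mono := hg.mono.inf hh.mono
  tendsto x := by
    simpa only [Pi.inf_apply, EReal.coe_strictMono.monotone.map_inf] using
      (hg.tendsto x).inf_nhds (hh.tendsto x)

theorem monotone_coe_I (hg : S.IncreasesTo g G) : Monotone fun n => (S.I (g n) : EReal) :=
  fun _ _ h => EReal.coe_le_coe (I_mono (hg.mem _) (hg.mem _) (hg.mono h))

theorem coe_I_le_iSup (hg : S.IncreasesTo g G) {k : X → ℝ} (hk : k ∈ S.L)
    (hkG : ∀ x, (k x : EReal) ≤ G x) : (S.I k : EReal) ≤ ⨆ n, (S.I (g n) : EReal) := by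
  have hinf := (const hk).inf hg
  have hlim (x : X) : Tendsto (fun n => (k ⊓ g n) x) atTop (𝓝 (k x)) := by
    rw [← EReal.tendsto_coe]
    simpa only [Pi.inf_apply, inf_of_le_left (hkG x)] using hinf.tendsto x
  refine le_of_tendsto'
    (EReal.tendsto_coe.2 (tendsto_I_of_monotone hinf.mem hinf.mono hk hlim)) fun n => ?_
  exact le_iSup_of_le n (EReal.coe_le_coe (I_mono (hinf.mem n) (hg.mem n) inf_le_right))

theorem Iup_eq_iSup (hg : S.IncreasesTo g G) : Iup S G = ⨆ n, (S.I (g n) : EReal) := by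
  apply le_antisymm
  · refine sSup_le ?_
    rintro c ⟨h, hmem, hmono, hlim, hc⟩
    have hh : S.IncreasesTo h G := ⟨hmem, monotone_nat_of_le_succ hmono, hlim⟩
    exact le_of_tendsto' hc fun n => hg.coe_I_le_iSup (hmem n) (hh.coe_le n)
  · exact le_sSup ⟨g, hg.mem, fun n x => hg.mono n.le_succ x, hg.tendsto,
      tendsto_atTop_iSup hg.monotone_coe_I⟩

theorem tendsto_I (hg : S.IncreasesTo g G) :
    Tendsto (fun n => (S.I (g n) : EReal)) atTop (𝓝 (Iup S G)) :=
  hg.Iup_eq_iSup ▸ tendsto_atTop_iSup hg.monotone_coe_I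

end IncreasesTo

end IncreasesTo

section Lup

variable {G H : X → EReal}

theorem memLup_coe {k : X → ℝ} (hk : k ∈ S.L) : MemLup S fun x => (k x : EReal) :=
  memLup_iff.2 ⟨_, .const hk⟩

theorem Iup_coe {k : X → ℝ} (hk : k ∈ S.L) : Iup S (fun x => (k x : EReal)) = S.I k := by
  rw [(IncreasesTo.const hk).Iup_eq_iSup, iSup_const]

theorem memLup_add (hG : MemLup S G) (hH : MemLup S H) : MemLup S (G + H) := by
  obtain ⟨g, hg⟩ := memLup_iff.1 hG
  obtain ⟨h, hh⟩ := memLup_iff.1 hH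
  exact memLup_iff.2 ⟨_, hg.add hh⟩

theorem memLup_sup (hG : MemLup S G) (hH : MemLup S H) : MemLup S (G ⊔ H) := by
  obtain ⟨g, hg⟩ := memLup_iff.1 hG
  obtain ⟨h, hh⟩ := memLup_iff.1 hH
  exact memLup_iff.2 ⟨_, hg.sup hh⟩

theorem memLup_inf (hG : MemLup S G) (hH : MemLup S H) : MemLup S (G ⊓ H) := by
  obtain ⟨g, hg⟩ := memLup_iff.1 hG
  obtain ⟨h, hh⟩ := memLup_iff.1 hH
  exact memLup_iff.2 ⟨_, hg.inf hh⟩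

theorem memLup_ne_bot (hG : MemLup S G) (x : X) : G x ≠ ⊥ := by
  obtain ⟨g, hg⟩ := memLup_iff.1 hG
  exact hg.ne_bot x

theorem Iup_mono (hG : MemLup S G) (hH : MemLup S H) (hGH : G ≤ H) : Iup S G ≤ Iup S H := by
  obtain ⟨g, hg⟩ := memLup_iff.1 hG
  obtain ⟨h, hh⟩ := memLup_iff.1 hH
  rw [hg.Iup_eq_iSup, hh.Iup_eq_iSup]
  exact iSup_le fun n => hh.coe_I_le_iSup (hg.mem n) fun x => (hg.coe_le n x).trans (hGH x)

theorem Iup_ne_bot (hG : MemLup S G) : Iup S G ≠ ⊥ := by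
  obtain ⟨g, hg⟩ := memLup_iff.1 hG
  rw [hg.Iup_eq_iSup]
  exact ((EReal.bot_lt_coe _).trans_le (le_iSup (fun n => (S.I (g n) : EReal)) 0)).ne'

theorem tendsto_I_add {g h : ℕ → X → ℝ} (hg : S.IncreasesTo g G) (hh : S.IncreasesTo h H) :
    Tendsto (fun n => ((S.I (g n) + S.I (h n) : ℝ) : EReal)) atTop (𝓝 (Iup S G + Iup S H)) :=
  (EReal.continuousAt_add (.inr (Iup_ne_bot (memLup_iff.2 ⟨h, hh⟩)))
    (.inl (Iup_ne_bot (memLup_iff.2 ⟨g, hg⟩)))).tendsto.comp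
      (hg.tendsto_I.prodMk_nhds hh.tendsto_I)

theorem Iup_add (hG : MemLup S G) (hH : MemLup S H) : Iup S (G + H) = Iup S G + Iup S H := by
  obtain ⟨g, hg⟩ := memLup_iff.1 hG
  obtain ⟨h, hh⟩ := memLup_iff.1 hH
  refine tendsto_nhds_unique ?_ (tendsto_I_add hg hh)
  simpa only [S.I_add (hg.mem _) (hh.mem _)] using (hg.add hh).tendsto_I

theorem Iup_sup_add_Iup_inf (hG : MemLup S G) (hH : MemLup S H) :
    Iup S (G ⊔ H) + Iup S (G ⊓ H) = Iup S G + Iup S H := by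
  obtain ⟨g, hg⟩ := memLup_iff.1 hG
  obtain ⟨h, hh⟩ := memLup_iff.1 hH
  refine tendsto_nhds_unique ?_ (tendsto_I_add hg hh)
  simpa only [I_sup_add_I_inf (hg.mem _) (hh.mem _)] using
    tendsto_I_add (hg.sup hh) (hg.inf hh)

theorem exists_increasesTo_iSup {G : ℕ → X → EReal} (hG : ∀ n, MemLup S (G n))
    (hmono : Monotone G) : ∃ h, S.IncreasesTo h (⨆ n, G n) ∧ ∀ n x, (h n x : EReal) ≤ G n x := by
  choose g hg using fun n => memLup_iff.1 (hG n)
  let h : ℕ → X → ℝ := fun k => partialSups (fun n => g n k) k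
  have h_mono : Monotone h := fun i j hij =>
    partialSups_le _ _ _ fun n hn => ((hg n).mono hij).trans <|
      le_partialSups_of_le (fun n => g n j) (hn.trans hij)
  have h_le (k x) : (h k x : EReal) ≤ G k x := by
    obtain ⟨n, hn, hmax⟩ := exists_partialSups_eq (fun n => g n k x) k
    have hk : h k x = g n k x := (Pi.partialSups_apply _ _ _).trans hmax
    exact hk ▸ ((hg n).coe_le k x).trans (hmono hn x)
  refine ⟨h, ⟨fun k => partialSups_mem (fun n => (hg n).mem k) k, h_mono, fun x => ?_⟩, h_le⟩
  refine tendsto_atTop_isLUB (fun _ _ hij => EReal.coe_le_coe (h_mono hij x)) ⟨?_, fun b hb => ?_⟩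
  · rintro _ ⟨k, rfl⟩
    exact (h_le k x).trans (le_iSup G k x)
  · rw [iSup_apply]
    refine iSup_le fun n => le_of_tendsto ((hg n).tendsto x) ?_
    filter_upwards [eventually_ge_atTop n] with k hk
    exact (EReal.coe_le_coe (le_partialSups_of_le (fun n => g n k) hk x)).trans (hb ⟨k, rfl⟩)

theorem memLup_iSup {G : ℕ → X → EReal} (hG : ∀ n, MemLup S (G n)) (hmono : Monotone G) :
    MemLup S (⨆ n, G n) :=
  let ⟨h, hh, _⟩ := exists_increasesTo_iSup hG hmono
  memLup_iff.2 ⟨h, hh⟩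

theorem Iup_iSup {G : ℕ → X → EReal} (hG : ∀ n, MemLup S (G n)) (hmono : Monotone G) :
    Iup S (⨆ n, G n) = ⨆ n, Iup S (G n) := by
  apply le_antisymm
  · obtain ⟨h, hh, h_le⟩ := exists_increasesTo_iSup hG hmono
    rw [hh.Iup_eq_iSup]
    refine iSup_mono fun n => ?_
    rw [← Iup_coe (hh.mem n)]
    exact Iup_mono (memLup_coe (hh.mem n)) (hG n) (h_le n)
  · exact iSup_le fun n => Iup_mono (hG n) (memLup_iSup hG hmono) (le_iSup G n)

end Lup

section UpperIntegral

variable {f g G : X → EReal}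

theorem upperInt_le_Iup (hG : MemLup S G) (hfG : f ≤ G) : upperInt S f ≤ Iup S G :=
  sInf_le ⟨G, ⟨hG, hfG⟩, rfl⟩

theorem le_upperInt {a : EReal} (h : ∀ G, MemLup S G → f ≤ G → a ≤ Iup S G) :
    a ≤ upperInt S f := by
  refine le_sInf ?_
  rintro _ ⟨G, ⟨hG, hfG⟩, rfl⟩
  exact h G hG hfG

theorem upperInt_lt_iff {a : EReal} :
    upperInt S f < a ↔ ∃ G, MemLup S G ∧ f ≤ G ∧ Iup S G < a := by
  simp only [upperInt, sInf_lt_iff, Set.exists_mem_image, Set.mem_ofPred_eq, and_assoc, Pi.le_def]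

theorem upperInt_mono (hfg : f ≤ g) : upperInt S f ≤ upperInt S g :=
  le_upperInt fun _ hG hgG => upperInt_le_Iup hG (hfg.trans hgG)

theorem upperInt_eq_Iup (hG : MemLup S G) : upperInt S G = Iup S G :=
  le_antisymm (upperInt_le_Iup hG le_rfl) (le_upperInt fun _ hH => Iup_mono hG hH)

variable (S) in
theorem upperInt_zero : upperInt S 0 = 0 := by
  have h := (upperInt_eq_Iup (memLup_coe S.zero_mem)).trans (Iup_coe S.zero_mem)
  rwa [I_zero] at h

theorem upperInt_nonneg (hf : 0 ≤ f) : 0 ≤ upperInt S f :=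
  upperInt_zero S ▸ upperInt_mono hf

theorem upperInt_add_le (h₁ : upperInt S f ≠ ⊥ ∨ upperInt S g ≠ ⊤)
    (h₂ : upperInt S f ≠ ⊤ ∨ upperInt S g ≠ ⊥) :
    upperInt S (f + g) ≤ upperInt S f + upperInt S g := by
  refine EReal.le_add_of_forall_gt h₁ h₂ fun a ha b hb => ?_
  obtain ⟨F, hF, hfF, hFa⟩ := upperInt_lt_iff.1 ha
  obtain ⟨G, hG, hgG, hGb⟩ := upperInt_lt_iff.1 hb
  calc upperInt S (f + g) ≤ Iup S (F + G) :=
        upperInt_le_Iup (memLup_add hF hG) (add_le_add hfF hgG)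
    _ = Iup S F + Iup S G := Iup_add hF hG
    _ ≤ a + b := add_le_add hFa.le hGb.le

theorem exists_majorant_ge {a b ε : ℝ} (hfg : f ≤ g) (hf : upperInt S f = a)
    (hg : upperInt S g = b) (hG : MemLup S G) (hfG : f ≤ G) (hGa : Iup S G < (a + ε : ℝ)) :
    ∃ H, MemLup S H ∧ g ≤ H ∧ Iup S H < (b + ε : ℝ) ∧ G ≤ H := by
  obtain ⟨r, hr⟩ : ∃ r : ℝ, (r : EReal) = Iup S G :=
    ⟨_, EReal.coe_toReal hGa.ne_top (Iup_ne_bot hG)⟩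
  have hra : r < a + ε := by rwa [← hr, EReal.coe_lt_coe_iff] at hGa
  obtain ⟨H, hH, hgH, hHb⟩ : ∃ H, MemLup S H ∧ g ≤ H ∧ Iup S H < (b + (a + ε - r) : ℝ) := by
    rw [← upperInt_lt_iff, hg, EReal.coe_lt_coe_iff]
    linarith
  refine ⟨G ⊔ H, memLup_sup hG hH, hgH.trans le_sup_right, ?_, le_sup_left⟩
  have hinf : (a : EReal) ≤ Iup S (G ⊓ H) :=
    hf ▸ upperInt_le_Iup (memLup_inf hG hH) (le_inf hfG (hfg.trans hgH))
  by_contra! hsup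
  have : ((b + ε + a : ℝ) : EReal) < (r + (b + (a + ε - r)) : ℝ) := calc
    ((b + ε + a : ℝ) : EReal) ≤ Iup S (G ⊔ H) + Iup S (G ⊓ H) := add_le_add hsup hinf
    _ = r + Iup S H := by rw [Iup_sup_add_Iup_inf hG hH, hr]
    _ < (r + (b + (a + ε - r)) : ℝ) := EReal.add_lt_add_left_coe hHb r
  rw [EReal.coe_lt_coe_iff] at this
  linarith

theorem exists_monotone_majorants {f : ℕ → X → EReal} (hf : Monotone f) {a : ℕ → ℝ}
    (ha : ∀ n, upperInt S (f n) = a n) {ε : ℝ} (hε : 0 < ε) :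
    ∃ G : ℕ → X → EReal, Monotone G ∧
      ∀ n, MemLup S (G n) ∧ f n ≤ G n ∧ Iup S (G n) < (a n + ε : ℝ) := by
  obtain ⟨G₀, hG₀⟩ : ∃ G, MemLup S G ∧ f 0 ≤ G ∧ Iup S G < (a 0 + ε : ℝ) := by
    rw [← upperInt_lt_iff, ha, EReal.coe_lt_coe_iff]
    linarith
  choose! next hmem hle hlt hge using fun n G (hG : MemLup S G) (hfG : f n ≤ G)
    (hGa : Iup S G < (a n + ε : ℝ)) =>
      exists_majorant_ge (hf n.le_succ) (ha n) (ha (n + 1)) hG hfG hGa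
  let G : ℕ → X → EReal := fun n => Nat.rec G₀ next n
  have hG (n) : MemLup S (G n) ∧ f n ≤ G n ∧ Iup S (G n) < (a n + ε : ℝ) := by
    induction n with
    | zero => exact hG₀
    | succ n ih =>
      obtain ⟨h₁, h₂, h₃⟩ := ih
      exact ⟨hmem n _ h₁ h₂ h₃, hle n _ h₁ h₂ h₃, hlt n _ h₁ h₂ h₃⟩
  exact ⟨G, monotone_nat_of_le_succ fun n => hge n _ (hG n).1 (hG n).2.1 (hG n).2.2, hG⟩

theorem upperInt_iSup {f : ℕ → X → EReal} (hf : Monotone f) (h₀ : upperInt S (f 0) ≠ ⊥) :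
    upperInt S (⨆ n, f n) = ⨆ n, upperInt S (f n) := by
  refine le_antisymm ?_ (iSup_le fun n => upperInt_mono (le_iSup f n))
  rw [← EReal.le_of_forall_lt_iff_le]
  intro z hz
  obtain ⟨y, hy, hyz⟩ := EReal.lt_iff_exists_real_btwn.1 hz
  have hfy (n) : upperInt S (f n) < y := (le_iSup (fun n => upperInt S (f n)) n).trans_lt hy
  have hfbot (n) : upperInt S (f n) ≠ ⊥ :=
    (h₀.bot_lt.trans_le (upperInt_mono (hf n.zero_le))).ne'
  obtain ⟨G, hGmono, hG⟩ := exists_monotone_majorants hf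
    (fun n => (EReal.coe_toReal (hfy n).ne_top (hfbot n)).symm)
    (sub_pos.2 (EReal.coe_lt_coe_iff.1 hyz))
  calc upperInt S (⨆ n, f n) ≤ Iup S (⨆ n, G n) :=
        upperInt_le_Iup (memLup_iSup (fun n => (hG n).1) hGmono) (iSup_mono fun n => (hG n).2.1)
    _ = ⨆ n, Iup S (G n) := Iup_iSup (fun n => (hG n).1) hGmono
    _ ≤ z := iSup_le fun n => (hG n).2.2.le.trans <| EReal.coe_le_coe <| by
        have := EReal.toReal_le_toReal (hfy n).le (hfbot n) (EReal.coe_ne_top y)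
        rw [EReal.toReal_coe] at this
        linarith

theorem tendsto_upperInt {f : ℕ → X → EReal} {F : X → EReal} (hf : Monotone f)
    (h₀ : upperInt S (f 0) ≠ ⊥) (hlim : ∀ x, Tendsto (fun n => f n x) atTop (𝓝 (F x))) :
    Tendsto (fun n => upperInt S (f n)) atTop (𝓝 (upperInt S F)) := by
  have hF : F = ⨆ n, f n :=
    tendsto_nhds_unique (tendsto_pi_nhds.2 hlim) (tendsto_atTop_iSup hf)
  rw [hF, upperInt_iSup hf h₀]
  exact tendsto_atTop_iSup fun _ _ h => upperInt_mono (hf h)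

end UpperIntegral

section Null

variable {f g G : X → EReal} {N : Set X}

/-- `N` is a null set: its indicator function has upper integral `0`. -/
def IsNull (S : IntegralSystem X) (N : Set X) : Prop :=
  upperInt S (N.indicator 1) = 0

theorem isNull_setOf_iff {p : X → Prop} [DecidablePred p] :
    S.IsNull {x | p x} ↔ upperInt S (fun x => if p x then (1 : EReal) else 0) = 0 := by
  have h : {x | p x}.indicator 1 = fun x => if p x then (1 : EReal) else 0 := by
    ext x
    simp only [Set.indicator_apply, Set.mem_ofPred_eq, Pi.one_apply]
  rw [IsNull, h]

theorem upperInt_indicator_eq_top_le {g : ℕ → X → ℝ} (hg : S.IncreasesTo g G) (n : ℕ) :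
    upperInt S ({x | G x = ⊤}.indicator 1) ≤ Iup S G - S.I (g n) := by
  have hneg := neg_mem (hg.mem n)
  have hG : MemLup S G := memLup_iff.2 ⟨g, hg⟩
  have hle : {x | G x = ⊤}.indicator 1 ≤ G + fun x => ((-g n) x : EReal) := by
    refine Set.indicator_le' (fun x (hx : G x = ⊤) => ?_) fun x _ => ?_
    · rw [Pi.add_apply, hx, EReal.top_add_coe]
      exact le_top
    · exact (EReal.sub_nonneg (.inr (EReal.coe_ne_top _)) (.inr (EReal.coe_ne_bot _))).2
        (hg.coe_le n x)
  calc upperInt S ({x | G x = ⊤}.indicator 1)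
      ≤ Iup S (G + fun x => ((-g n) x : EReal)) :=
        upperInt_le_Iup (memLup_add hG (memLup_coe hneg)) hle
    _ = Iup S G - S.I (g n) := by
        rw [Iup_add hG (memLup_coe hneg), Iup_coe hneg, I_neg (hg.mem n), EReal.coe_neg,
          sub_eq_add_neg]

theorem IsNull.mono {M : Set X} (hN : S.IsNull N) (hMN : M ⊆ N) : S.IsNull M := by
  refine le_antisymm (hN ▸ upperInt_mono ?_)
    (upperInt_nonneg (Set.indicator_nonneg fun _ _ => zero_le_one))
  exact Set.indicator_le_indicator_of_subset hMN fun _ => zero_le_one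

theorem isNull_setOf_eq_top (hf : upperInt S f < ⊤) : S.IsNull {x | f x = ⊤} := by
  obtain ⟨G, hG, hfG, hGtop⟩ := upperInt_lt_iff.1 hf
  obtain ⟨g, hg⟩ := memLup_iff.1 hG
  refine IsNull.mono (N := {x | G x = ⊤}) ?_ fun x (hx : f x = ⊤) => top_le_iff.1 (hx ▸ hfG x)
  lift Iup S G to ℝ using ⟨hGtop.ne, Iup_ne_bot hG⟩ with a ha
  have hlim : Tendsto (fun n => ((a - S.I (g n) : ℝ) : EReal)) atTop (𝓝 0) := by
    have hI := EReal.tendsto_coe.1 (ha ▸ hg.tendsto_I)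
    simpa only [sub_self, EReal.coe_zero] using EReal.tendsto_coe.2 (hI.const_sub a)
  refine le_antisymm (ge_of_tendsto' hlim fun n => ?_)
    (upperInt_nonneg (Set.indicator_nonneg fun _ _ => zero_le_one))
  exact EReal.coe_sub a _ ▸ ha ▸ upperInt_indicator_eq_top_le hg n

theorem IsNull.upperInt_indicator_natCast (hN : S.IsNull N) (n : ℕ) :
    upperInt S (N.indicator fun _ => (n : EReal)) = 0 := by
  induction n with
  | zero => simpa only [Nat.cast_zero, Set.indicator_zero] using! upperInt_zero S
  | succ n ih =>
    refine le_antisymm ?_ (upperInt_nonneg (Set.indicator_nonneg fun _ _ => Nat.cast_nonneg' _))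
    have hsplit : (N.indicator fun _ => ((n + 1 : ℕ) : EReal)) =
        (N.indicator fun _ => (n : EReal)) + N.indicator 1 := by
      simp only [Nat.cast_succ, ← Set.indicator_add']
      rfl
    have hsum := upperInt_add_le (S := S) (f := N.indicator fun _ => (n : EReal))
      (g := N.indicator 1) (.inl (by simp [ih])) (.inl (by simp [ih]))
    rwa [← hsplit, ih, hN, add_zero] at hsum

theorem IsNull.upperInt_indicator_top (hN : S.IsNull N) :
    upperInt S (N.indicator ⊤) = 0 := by
  have hmono : Monotone fun n : ℕ => N.indicator fun _ : X => (n : EReal) := fun m n hmn =>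
    fun _ => Set.indicator_le_indicator' fun _ => EReal.natCast_le_iff.2 hmn
  refine tendsto_nhds_unique (tendsto_upperInt hmono ?_ fun x => ?_)
    (tendsto_const_nhds.congr fun n => (hN.upperInt_indicator_natCast n).symm)
  · simp only [hN.upperInt_indicator_natCast, ne_eq, EReal.zero_ne_bot, not_false_eq_true]
  · by_cases hx : x ∈ N
    · simpa [hx] using EReal.tendsto_coe_nhds_top_iff.2 tendsto_natCast_atTop_atTop
    · simp [hx]

theorem upperInt_le_of_le_off_null (hN : S.IsNull N) (hfg : ∀ x ∉ N, f x ≤ g x) :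
    upperInt S f ≤ upperInt S g := by
  refine le_upperInt fun G hG hgG => ?_
  obtain ⟨h, hh⟩ := memLup_iff.1 hG
  have hle : f ≤ G + N.indicator ⊤ := fun x => by
    by_cases hx : x ∈ N
    · simp [hx, EReal.add_top_of_ne_bot (hh.ne_bot x)]
    · simpa [hx] using (hfg x hx).trans (hgG x)
  have h0 := hN.upperInt_indicator_top
  calc upperInt S f ≤ upperInt S (G + N.indicator ⊤) := upperInt_mono hle
    _ ≤ upperInt S G + upperInt S (N.indicator ⊤) :=
        upperInt_add_le (.inr (by simp [h0])) (.inr (by simp [h0]))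
    _ = Iup S G := by rw [h0, add_zero, upperInt_eq_Iup hG]

end Null

section LowerIntegral

variable {f g : X → EReal}

variable (S) in
theorem lowerInt_eq_neg_upperInt_neg (f : X → EReal) : lowerInt S f = -upperInt S (-f) := by
  apply le_antisymm
  · refine sSup_le ?_
    rintro _ ⟨g, ⟨hg, hgf⟩, rfl⟩
    exact EReal.neg_le_neg_iff.2 (upperInt_le_Iup hg fun x => EReal.neg_le_neg_iff.2 (hgf x))
  · refine EReal.neg_le.1 (le_upperInt fun G hG hfG => EReal.neg_le.1 (le_sSup ?_))
    refine ⟨-G, ⟨?_, fun x => EReal.neg_le.1 (hfG x)⟩, ?_⟩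
    · simpa [MemLdown] using hG
    · simp [Idown]

theorem ereal_neg_le_iff_add_nonneg {a b : EReal} (ha : a ≠ ⊥) (hb : b ≠ ⊥) :
    -a ≤ b ↔ 0 ≤ a + b := by
  rw [← EReal.sub_nonneg (.inr (by simpa using ha)) (.inl hb), sub_eq_add_neg, neg_neg, add_comm]

theorem lowerInt_le_upperInt (f : X → EReal) : lowerInt S f ≤ upperInt S f := by
  rw [lowerInt_eq_neg_upperInt_neg]
  refine EReal.neg_le.1 (le_upperInt fun H hH hfH => ?_)
  refine EReal.neg_le.1 (le_upperInt fun G hG hfG => ?_)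
  have hHG : 0 ≤ H + G := fun x =>
    (ereal_neg_le_iff_add_nonneg (memLup_ne_bot hH x) (memLup_ne_bot hG x)).1
      ((EReal.neg_le.1 (hfH x)).trans (hfG x))
  rw [ereal_neg_le_iff_add_nonneg (Iup_ne_bot hH) (Iup_ne_bot hG), ← Iup_add hH hG,
    ← upperInt_eq_Iup (memLup_add hH hG)]
  exact upperInt_nonneg hHG

theorem lowerInt_le_of_le_off_null {N : Set X} (hN : S.IsNull N) (hfg : ∀ x ∉ N, f x ≤ g x) :
    lowerInt S f ≤ lowerInt S g := by
  rw [lowerInt_eq_neg_upperInt_neg, lowerInt_eq_neg_upperInt_neg, EReal.neg_le_neg_iff]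
  exact upperInt_le_of_le_off_null hN fun x hx => EReal.neg_le_neg_iff.2 (hfg x hx)

end LowerIntegral

section Integrable

variable {f : X → ℝ}

theorem upperInt_eq_Int1 (hf : Integrable1 S f) :
    upperInt S (fun x => (f x : EReal)) = Int1 S f := by
  obtain ⟨c, -, hc⟩ := hf
  rw [Int1, hc, EReal.toReal_coe]

theorem lowerInt_eq_Int1 (hf : Integrable1 S f) :
    lowerInt S (fun x => (f x : EReal)) = Int1 S f := by
  obtain ⟨c, hl, hu⟩ := hf
  rw [Int1, hl, hu, EReal.toReal_coe]

theorem integrable1_and_Int1_eq {c : ℝ} (hupper : upperInt S (fun x => (f x : EReal)) ≤ c)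
    (hlower : c ≤ lowerInt S fun x => (f x : EReal)) : Integrable1 S f ∧ Int1 S f = c := by
  have hle := lowerInt_le_upperInt (S := S) fun x => (f x : EReal)
  have hu := le_antisymm hupper (hlower.trans hle)
  exact ⟨⟨c, le_antisymm (hle.trans hupper) hlower, hu⟩, by rw [Int1, hu, EReal.toReal_coe]⟩

end Integrable

end IntegralSystem

open IntegralSystem

/-- Strengthened monotone convergence: if `(f n)` in `L¹` increases pointwise to
`F : X → (−∞,∞]` and `I¹ (f n)` converges to a real number `c` (i.e. `lim I¹ (f n) < ∞`),
then `{F = ∞}` is a null set, the real-valued function equal to `F` on `{F < ∞}` and to `0`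
on `{F = ∞}` is integrable, and its integral is `c = lim I¹ (f n)`. -/
theorem daniell_monotone_convergence_ae (S : IntegralSystem X) (f : ℕ → X → ℝ) (F : X → EReal)
    (hf : ∀ n, Integrable1 S (f n))
    (hmono : ∀ n x, f n x ≤ f (n + 1) x)
    (hlim : ∀ x, Tendsto (fun n => ((f n x : EReal))) atTop (𝓝 (F x)))
    (c : ℝ) (hc : Tendsto (fun n => Int1 S (f n)) atTop (𝓝 c)) :
    upperInt S (fun x => if F x = ⊤ then (1 : EReal) else 0) = 0 ∧
    Integrable1 S (fun x => (F x).toReal) ∧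
    Int1 S (fun x => (F x).toReal) = c := by
  have hfmono : Monotone fun n x => (f n x : EReal) :=
    monotone_nat_of_le_succ fun n x => EReal.coe_le_coe (hmono n x)
  have hle (n x) : (f n x : EReal) ≤ F x :=
    Monotone.ge_of_tendsto (fun _ _ h => hfmono h x) (hlim x) n
  have hbot (x) : F x ≠ ⊥ := ((EReal.bot_lt_coe _).trans_le (hle 0 x)).ne'
  have hFc : upperInt S F = c := by
    have hlimF := tendsto_upperInt hfmono (upperInt_eq_Int1 (hf 0) ▸ EReal.coe_ne_bot _) hlim
    simp only [upperInt_eq_Int1 (hf _)] at hlimF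
    exact tendsto_nhds_unique hlimF (EReal.tendsto_coe.2 hc)
  have hN : S.IsNull {x | F x = ⊤} := isNull_setOf_eq_top (hFc ▸ EReal.coe_lt_top c)
  refine ⟨isNull_setOf_iff.1 hN, integrable1_and_Int1_eq ?_ ?_⟩
  · exact hFc ▸ upperInt_mono fun x => EReal.coe_toReal_le (hbot x)
  · refine le_of_tendsto' (EReal.tendsto_coe.2 hc) fun n => ?_
    rw [← lowerInt_eq_Int1 (hf n)]
    refine lowerInt_le_of_le_off_null hN fun x hx => ?_
    exact (hle n x).trans_eq (EReal.coe_toReal hx (hbot x)).symm
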